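/- Let ψ : (0,∞) → ℝ be one of the functions ψ(x) = x², ψ(x) = x^p for some p < 0, or ψ(x) = −log x. Let n ≥ 1 be an integer, θ ∈ (0, π/2], and let K be a θ-capillary convex body in ℝ^{n+1} with capillary support function s and base Ω. Then s(ζ) − ⟨ζ, z⟩ > 0 for every ζ ∈ C_θ and every z in the interior of Ω relative to the hyperplane {x_{n+1} = 0}, and there exists a unique z in this relative interior of Ω such that ∫_{C_θ} ψ'(s(ζ) − ⟨ζ, z⟩) ζ_i dσ(ζ) = 0 for every i = 1,…,n. -/

import Mathlib

open MeasureTheory Real Set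
open scoped RealInnerProductSpace

noncomputable section

abbrev V (n : ℕ) := EuclideanSpace ℝ (Fin (n + 1))

/-- The vertical unit vector `E_{n+1}`. -/
def Etop (n : ℕ) : V n := EuclideanSpace.single (Fin.last n) 1

/-- The spherical cap `S^n_θ`. -/
def sphCap (n : ℕ) (θ : ℝ) : Set (V n) :=
  {u | ‖u‖ = 1 ∧ Real.cos θ ≤ u (Fin.last n)}

/-- The boundary circle `∂S^n_θ`. -/
def sphCapBdry (n : ℕ) (θ : ℝ) : Set (V n) :=
  {u | ‖u‖ = 1 ∧ u (Fin.last n) = Real.cos θ}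

/-- The capillary cap `C_θ`. -/
def capCap (n : ℕ) (θ : ℝ) : Set (V n) :=
  {ζ | 0 ≤ ζ (Fin.last n) ∧ ‖ζ + Real.cos θ • Etop n‖ = 1}

/-- The open cone over `S^n_θ`. -/
def coneCap (n : ℕ) (θ : ℝ) : Set (V n) :=
  {x | ∃ l : ℝ, 0 < l ∧ ∃ u ∈ sphCap n θ, x = l • u}

/-- `G` is a positively 1-homogeneous extension of `g : C_θ → ℝ` which is `C^m` on an
open neighborhood of the cone over `S^n_θ`. -/
def IsHomExt (n : ℕ) (θ : ℝ) (m : ℕ∞) (g G : V n → ℝ) : Prop :=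
  (∃ U : Set (V n), IsOpen U ∧ coneCap n θ ⊆ U ∧ ContDiffOn ℝ m G U) ∧
  (∀ l : ℝ, 0 < l → ∀ u ∈ sphCap n θ, G (l • u) = l * G u) ∧
  (∀ ζ ∈ capCap n θ, G (ζ + Real.cos θ • Etop n) = g ζ)

/-- The Hessian of `G` at `u` as a quadratic/bilinear form. -/
def hessQ (n : ℕ) (G : V n → ℝ) (u v w : V n) : ℝ :=
  fderiv ℝ (fderiv ℝ G) u v w

/-- The Hessian matrix `D²G(u)` in the standard coordinates. -/
def hessM (n : ℕ) (G : V n → ℝ) (u : V n) : Matrix (Fin (n + 1)) (Fin (n + 1)) ℝ :=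
  fun i j => fderiv ℝ (fderiv ℝ G) u (EuclideanSpace.single i 1) (EuclideanSpace.single j 1)

/-- `σ_j` of the eigenvalues of `D²G(u)` (via characteristic polynomial coefficients). -/
def sigmaElem (n : ℕ) (j : ℕ) (G : V n → ℝ) (u : V n) : ℝ :=
  (-1 : ℝ) ^ j * ((hessM n G u).charpoly.coeff (n + 1 - j))

/-- `τ[g] ≥ 0` : the Hessian of the extension is positive semidefinite on `S^n_θ`. -/
def TauNonneg (n : ℕ) (θ : ℝ) (G : V n → ℝ) : Prop :=
  ∀ u ∈ sphCap n θ, ∀ v : V n, 0 ≤ hessQ n G u v v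

/-- `τ[g] > 0`. -/
def TauPos (n : ℕ) (θ : ℝ) (G : V n → ℝ) : Prop :=
  TauNonneg n θ G ∧
  ∀ u ∈ sphCap n θ, ∀ v : V n, v ≠ 0 → ⟪v, u⟫ = 0 → 0 < hessQ n G u v v

/-- Capillary (Robin) boundary condition: `∂_{n+1}G = 0` on `∂S^n_θ`. -/
def IsCapillaryF (n : ℕ) (θ : ℝ) (G : V n → ℝ) : Prop :=
  ∀ u ∈ sphCapBdry n θ, fderiv ℝ G u (Etop n) = 0

/-- Reflection negating the horizontal coordinates. -/
def horizNeg (n : ℕ) (ζ : V n) : V n := (2 * ζ (Fin.last n)) • Etop n - ζ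

/-- Support function of a set. -/
def suppFn (n : ℕ) (K : Set (V n)) (u : V n) : ℝ := sSup ((fun y => ⟪u, y⟫) '' K)

/-- Relative interior (within the hyperplane `{x_{n+1}=0}`) of the base `K ∩ {x_{n+1}=0}`. -/
def relintBase (n : ℕ) (K : Set (V n)) : Set (V n) :=
  {x | x (Fin.last n) = 0 ∧ ∃ ε > 0, ∀ y : V n, y (Fin.last n) = 0 → ‖y - x‖ < ε → y ∈ K}

/-- A `θ`-capillary convex body. -/
def IsCapBody (n : ℕ) (θ : ℝ) (K : Set (V n)) : Prop :=
  IsCompact K ∧ Convex ℝ K ∧ (interior K).Nonempty ∧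
  (∀ x ∈ K, 0 ≤ x (Fin.last n)) ∧
  (∀ x ∈ K, 0 < x (Fin.last n) → ∀ u : V n, ‖u‖ = 1 → ⟪u, x⟫ = suppFn n K u →
    Real.cos θ ≤ u (Fin.last n)) ∧
  (∀ v : V n, ‖v‖ = 1 → v (Fin.last n) = 0 →
    suppFn n K (Real.sin θ • v + Real.cos θ • Etop n) = Real.sin θ * suppFn n K v) ∧
  (relintBase n K).Nonempty

/-- `ψ` is one of `x²`, `x^p (p<0)`, `-log x`. -/
def PsiOK (ψ : ℝ → ℝ) : Prop :=
  (ψ = fun x : ℝ => x ^ 2) ∨ (∃ p : ℝ, p < 0 ∧ ψ = fun x : ℝ => x ^ p) ∨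
    (ψ = fun x : ℝ => -Real.log x)


section

variable {n : ℕ} {θ : ℝ} {K : Set (V n)}

lemma inner_Etop (x : V n) : ⟪x, Etop n⟫ = x (Fin.last n) := by
  simp [Etop, EuclideanSpace.inner_single_right]

lemma Etop_inner (x : V n) : ⟪Etop n, x⟫ = x (Fin.last n) := by
  rw [real_inner_comm, inner_Etop]

lemma Etop_last : Etop n (Fin.last n) = 1 := by simp [Etop]

lemma norm_Etop : ‖Etop n‖ = 1 := by simp [Etop]

lemma Etop_castSucc (i : Fin n) : Etop n i.castSucc = 0 := by
  simp [Etop, (Fin.castSucc_lt_last i).ne]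

lemma inner_add_smul_Etop {z : V n} (hz : z (Fin.last n) = 0) (ζ : V n) (c : ℝ) :
    ⟪ζ + c • Etop n, z⟫ = ⟪ζ, z⟫ := by
  rw [inner_add_left, real_inner_smul_left, Etop_inner, hz, mul_zero, add_zero]

/-! ### Support functions of compact sets -/

lemma inner_le_suppFn (hK : IsCompact K) (u : V n) {x : V n} (hx : x ∈ K) :
    ⟪u, x⟫ ≤ suppFn n K u :=
  le_csSup (hK.image (by fun_prop)).bddAbove (mem_image_of_mem _ hx)

lemma suppFn_le (hne : K.Nonempty) {u : V n} {c : ℝ} (h : ∀ x ∈ K, ⟪u, x⟫ ≤ c) :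
    suppFn n K u ≤ c :=
  csSup_le (hne.image _) (by rintro _ ⟨x, hx, rfl⟩; exact h x hx)

lemma continuous_suppFn (hK : IsCompact K) : Continuous (suppFn n K) :=
  hK.continuous_sSup (f := fun u y => ⟪u, y⟫) (by fun_prop)

/-! ### Geometry of capillary bodies -/

lemma relintBase_subset {z : V n} (hz : z ∈ relintBase n K) : z ∈ K := by
  obtain ⟨h0, ε, hε, h⟩ := hz
  exact h z h0 (by simpa using hε)

/-- Points on the half-open segment from a base point to a relative interior point are
relative interior points. -/
lemma relintBase_segment (hc : Convex ℝ K) {y p : V n} (hy : y ∈ K)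
    (hy0 : y (Fin.last n) = 0) (hp : p ∈ relintBase n K) {t : ℝ} (ht : 0 < t) (ht1 : t ≤ 1) :
    y + t • (p - y) ∈ relintBase n K := by
  obtain ⟨hp0, ε, hε, h⟩ := hp
  refine ⟨by simp [hp0, hy0], t * ε, by positivity, fun x hx0 hx => ?_⟩
  have hq : y + t⁻¹ • (x - y) ∈ K := by
    apply h
    · simp [hx0, hy0]
    · have : y + t⁻¹ • (x - y) - p = t⁻¹ • (x - (y + t • (p - y))) := by
        rw [← sub_sub, smul_sub _ (x - y), smul_smul, inv_mul_cancel₀ ht.ne']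
        module
      rw [this, norm_smul, norm_inv, Real.norm_eq_abs, abs_of_pos ht, inv_mul_lt_iff₀ ht]
      exact hx
  have := hc.add_smul_sub_mem hy hq ⟨ht.le, ht1⟩
  rwa [add_sub_cancel_left, smul_smul, mul_inv_cancel₀ ht.ne', one_smul, add_sub_cancel] at this

lemma IsCapBody.height_pos (hK : IsCapBody n θ K) : ∃ x ∈ K, 0 < x (Fin.last n) := by
  obtain ⟨-, -, ⟨x, hx⟩, h0, -⟩ := hK
  obtain ⟨ε, hε, h⟩ := Metric.isOpen_iff.1 isOpen_interior x hx
  refine ⟨x + (ε / 2) • Etop n, interior_subset (h ?_), ?_⟩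
  · simp [norm_smul, norm_Etop, abs_of_pos hε]
    linarith
  · have := h0 x (interior_subset hx)
    simp [Etop_last]
    linarith

/-- A capillary body is contained in every vertical half-space which contains its base. -/
lemma IsCapBody.inner_le_of_base (hθ : θ ∈ Ioc 0 (π / 2)) (hK : IsCapBody n θ K) {v : V n}
    (hv : v (Fin.last n) = 0) {m : ℝ} (hm : ∀ y ∈ K, y (Fin.last n) = 0 → ⟪v, y⟫ ≤ m)
    {x : V n} (hx : x ∈ K) : ⟪v, x⟫ ≤ m := by
  obtain ⟨hcomp, -, -, h0, hang, -, -⟩ := hK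
  by_contra! hlt
  have hcos : 0 ≤ Real.cos θ := Real.cos_nonneg_of_mem_Icc ⟨by linarith [hθ.1, pi_pos], hθ.2⟩
  obtain ⟨ε, hε, hlt'⟩ : ∃ ε : ℝ, 0 < ε ∧ m < ⟪v - ε • Etop n, x⟫ := by
    refine ⟨(⟪v, x⟫ - m) / (2 * (x (Fin.last n) + 1)), ?_, ?_⟩
    · have := h0 x hx
      have : 0 < ⟪v, x⟫ - m := by linarith
      positivity
    · rw [inner_sub_left, real_inner_smul_left, Etop_inner]
      have h1 := h0 x hx
      have : (⟪v, x⟫ - m) / (2 * (x (Fin.last n) + 1)) * x (Fin.last n) < ⟪v, x⟫ - m := by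
        rw [div_mul_eq_mul_div, div_lt_iff₀ (by positivity)]
        nlinarith
      linarith
  set w := v - ε • Etop n with hw
  have hwl : w (Fin.last n) = -ε := by simp [hw, hv, Etop_last]
  have hw0 : w ≠ 0 := by
    rintro h
    rw [h] at hwl
    simp at hwl
    linarith
  obtain ⟨y, hy, hmax⟩ := hcomp.exists_isMaxOn ⟨x, hx⟩
    (f := fun y => ⟪w, y⟫) (by fun_prop)
  have hmax : ∀ a ∈ K, ⟪w, a⟫ ≤ ⟪w, y⟫ := hmax
  have hypos : 0 < y (Fin.last n) := by
    refine (h0 y hy).lt_of_ne fun h => ?_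
    have h1 := hm y hy h.symm
    have h2 := hmax x hx
    have h3 : ⟪w, y⟫ = ⟪v, y⟫ := by
      rw [hw, inner_sub_left, real_inner_smul_left, Etop_inner, ← h]
      simp
    linarith
  have hwn : 0 < ‖w‖ := norm_pos_iff.2 hw0
  have h1 := hang y hy hypos (‖w‖⁻¹ • w) (by simp [norm_smul, hwn.ne']) (by
    apply le_antisymm (inner_le_suppFn hcomp _ hy)
    refine suppFn_le ⟨x, hx⟩ fun a ha => ?_
    rw [real_inner_smul_left, real_inner_smul_left]
    exact mul_le_mul_of_nonneg_left (hmax a ha) (by positivity))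
  have h2 : (‖w‖⁻¹ • w) (Fin.last n) = - (‖w‖⁻¹ * ε) := by simp [hwl]
  have : 0 < ‖w‖⁻¹ * ε := by positivity
  linarith

/-- The capillary support function, translated to have `z` as origin. -/
def capSupp (n : ℕ) (θ : ℝ) (K : Set (V n)) (z ζ : V n) : ℝ :=
  suppFn n K (ζ + Real.cos θ • Etop n) - ⟪ζ, z⟫

lemma continuous_capSupp (hK : IsCompact K) :
    Continuous fun q : V n × V n => capSupp n θ K q.1 q.2 := by
  have := continuous_suppFn hK
  unfold capSupp
  fun_prop

lemma continuous_capSupp_right (hK : IsCompact K) (z : V n) :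
    Continuous (capSupp n θ K z) := by
  have := continuous_suppFn hK
  unfold capSupp
  fun_prop

lemma capSupp_sub (y z ζ : V n) : capSupp n θ K y ζ - capSupp n θ K z ζ = -⟪ζ, y - z⟫ := by
  rw [capSupp, capSupp, inner_sub_right]; ring

lemma capSupp_segment (y z ζ : V n) (t : ℝ) : capSupp n θ K (z + t • (y - z)) ζ =
    capSupp n θ K z ζ + t * (capSupp n θ K y ζ - capSupp n θ K z ζ) := by
  rw [capSupp_sub, capSupp, capSupp, inner_add_right, real_inner_smul_right]; ring

lemma IsCapBody.capSupp_pos (hθ : θ ∈ Ioc 0 (π / 2)) (hK : IsCapBody n θ K) {ζ z : V n}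
    (hζ : ζ ∈ capCap n θ) (hz : z ∈ relintBase n K) : 0 < capSupp n θ K z ζ := by
  have hcos : 0 ≤ Real.cos θ := Real.cos_nonneg_of_mem_Icc ⟨by linarith [hθ.1, pi_pos], hθ.2⟩
  have hcomp := hK.1
  set u := ζ + Real.cos θ • Etop n with hu
  have hzeq : capSupp n θ K z ζ = suppFn n K u - ⟪u, z⟫ := by
    rw [capSupp, hu, inner_add_smul_Etop hz.1]
  have hun : ‖u‖ = 1 := hζ.2
  have hul : 0 ≤ u (Fin.last n) := by
    have := hζ.1
    simp [hu, Etop_last]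
    linarith
  rw [hzeq, sub_pos]
  set w := u - u (Fin.last n) • Etop n with hw
  have hwl : w (Fin.last n) = 0 := by simp [hw, Etop_last]
  by_cases hw0 : w = 0
  · have hu' : u = u (Fin.last n) • Etop n := sub_eq_zero.1 hw0
    have hpos : 0 < u (Fin.last n) := by
      refine hul.lt_of_ne fun h => ?_
      rw [← h, zero_smul] at hu'
      simp [hu'] at hun
    obtain ⟨x, hx, hx0⟩ := hK.height_pos
    refine lt_of_lt_of_le ?_ (inner_le_suppFn hcomp u hx)
    rw [hu', real_inner_smul_left, real_inner_smul_left, Etop_inner, Etop_inner, hz.1]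
    nlinarith
  · obtain ⟨hz0, ε, hε, h⟩ := hz
    have hwn : 0 < ‖w‖ := norm_pos_iff.2 hw0
    have hmem : z + (ε / (2 * ‖w‖)) • w ∈ K := by
      apply h
      · simp [hz0, hwl]
      · rw [add_sub_cancel_left, norm_smul, Real.norm_eq_abs, abs_of_pos (by positivity)]
        field_simp
        linarith
    refine lt_of_lt_of_le ?_ (inner_le_suppFn hcomp u hmem)
    have huw : ⟪u, w⟫ = ‖w‖ ^ 2 := by
      have : u = w + u (Fin.last n) • Etop n := by rw [hw]; abel
      rw [this, inner_add_smul_Etop hwl, real_inner_self_eq_norm_sq]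
    rw [inner_add_right, real_inner_smul_right, huw]
    have : 0 < ε / (2 * ‖w‖) * ‖w‖ ^ 2 := by positivity
    linarith

/-! ### Hausdorff measure on the cap -/

lemma isClosed_capCap : IsClosed (capCap n θ) := by
  have h1 : IsClosed {ζ : V n | 0 ≤ ζ (Fin.last n)} := isClosed_le continuous_const (by fun_prop)
  have h2 : IsClosed {ζ : V n | ‖ζ + Real.cos θ • Etop n‖ = 1} :=
    isClosed_eq (by fun_prop) continuous_const
  exact h1.inter h2

lemma isCompact_capCap : IsCompact (capCap n θ) := by
  apply Metric.isCompact_of_isClosed_isBounded isClosed_capCap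
  apply (Metric.isBounded_closedBall (x := -(Real.cos θ • Etop n)) (r := 1)).subset
  intro ζ hζ
  rw [mem_closedBall_iff_norm, sub_neg_eq_add]
  exact hζ.2.le

/-- Inverse stereographic projection onto the upper hemisphere, in coordinates. -/
def stereoUp (n : ℕ) (x : Fin n → ℝ) : V n :=
  WithLp.toLp 2 (Fin.snoc (α := fun _ => ℝ) (fun i => 2 * x i / (1 + ∑ j, x j ^ 2))
    ((1 - ∑ j, x j ^ 2) / (1 + ∑ j, x j ^ 2)))

lemma contDiff_stereoUp : ContDiff ℝ 1 (stereoUp n) := by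
  rw [contDiff_euclidean]
  have h : ∀ x : Fin n → ℝ, 1 + ∑ j, x j ^ 2 ≠ 0 := fun x => by positivity
  intro i
  refine Fin.lastCases ?_ (fun i => ?_) i
  · simp only [stereoUp, Fin.snoc_last]
    exact ContDiff.div (by fun_prop) (by fun_prop) h
  · simp only [stereoUp, Fin.snoc_castSucc]
    exact ContDiff.div (by fun_prop) (by fun_prop) h

lemma norm_sq_eq_sum_add (u : V n) :
    ‖u‖ ^ 2 = ∑ i : Fin n, u i.castSucc ^ 2 + u (Fin.last n) ^ 2 := by
  rw [EuclideanSpace.real_norm_sq_eq, Fin.sum_univ_castSucc]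

lemma upperHemisphere_subset : {u : V n | ‖u‖ = 1 ∧ 0 ≤ u (Fin.last n)} ⊆
    stereoUp n '' (Icc (fun _ => -1) (fun _ => 1)) := by
  rintro u ⟨hu, hl⟩
  have hsum := norm_sq_eq_sum_add u
  rw [hu] at hsum
  set l := u (Fin.last n) with hldef
  have hl1 : 0 < 1 + l := by linarith
  have hS : ∑ j : Fin n, (u j.castSucc / (1 + l)) ^ 2 = (1 - l) / (1 + l) := by
    simp only [div_pow, ← Finset.sum_div]
    rw [show ∑ i : Fin n, u i.castSucc ^ 2 = (1 - l) * (1 + l) by linarith]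
    field_simp
  have habs : ∀ i : Fin n, |u i.castSucc| ≤ 1 := fun i => by
    simpa [hu] using PiLp.norm_apply_le u i.castSucc
  refine ⟨fun i => u i.castSucc / (1 + l), ⟨fun i => ?_, fun i => ?_⟩, ?_⟩
  · have := (abs_le.1 (habs i)).1
    rw [le_div_iff₀ hl1]; linarith
  · have := (abs_le.1 (habs i)).2
    rw [div_le_iff₀ hl1]; linarith
  · ext i
    refine Fin.lastCases ?_ (fun i => ?_) i
    · simp only [stereoUp, Fin.snoc_last, hS]
      rw [← hldef]; field_simp; ring
    · simp only [stereoUp, Fin.snoc_castSucc, hS]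
      field_simp; ring

lemma hausdorffMeasure_pi_fin : (μH[(n : ℝ)] : Measure (Fin n → ℝ)) = volume := by
  simpa using hausdorffMeasure_pi_real (ι := Fin n)

lemma hausdorffMeasure_capCap_lt_top (hθ : θ ∈ Ioc 0 (π / 2)) :
    μH[(n : ℝ)] (capCap n θ) < ⊤ := by
  have hcos : 0 ≤ Real.cos θ := Real.cos_nonneg_of_mem_Icc ⟨by linarith [hθ.1, pi_pos], hθ.2⟩
  obtain ⟨C, hC⟩ := (contDiff_stereoUp (n := n)).contDiffOn.exists_lipschitzOnWith
    one_ne_zero (convex_Icc (fun _ => (-1 : ℝ)) (fun _ => 1)) isCompact_Icc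
  have h1 : μH[(n : ℝ)] (capCap n θ) =
      μH[(n : ℝ)] ((fun ζ => ζ + Real.cos θ • Etop n) '' capCap n θ) :=
    ((isometry_add_right _).hausdorffMeasure_image (Or.inl (by positivity)) _).symm
  rw [h1]
  have h2 : (fun ζ => ζ + Real.cos θ • Etop n) '' capCap n θ ⊆
      stereoUp n '' (Icc (fun _ => -1) (fun _ => 1)) := by
    refine Subset.trans ?_ upperHemisphere_subset
    rintro _ ⟨ζ, hζ, rfl⟩
    refine ⟨hζ.2, ?_⟩
    have := hζ.1
    simp [Etop_last]
    linarith
  refine (measure_mono h2).trans_lt ((hC.hausdorffMeasure_image_le (by positivity)).trans_lt ?_)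
  rw [hausdorffMeasure_pi_fin]
  refine ENNReal.mul_lt_top ?_ isCompact_Icc.measure_lt_top
  exact ENNReal.rpow_lt_top_of_nonneg (by positivity) ENNReal.coe_ne_top

/-- The graph parametrization of the cap over the horizontal hyperplane. -/
def capGraph (n : ℕ) (θ : ℝ) (x : Fin n → ℝ) : V n :=
  WithLp.toLp 2 (Fin.snoc (α := fun _ => ℝ) x (√(1 - ∑ j, x j ^ 2) - Real.cos θ))

lemma continuous_capGraph : Continuous (capGraph n θ) := by
  unfold capGraph
  refine (PiLp.continuous_toLp 2 _).comp ?_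
  rw [continuous_pi_iff]
  intro i
  refine Fin.lastCases ?_ (fun i => ?_) i
  · simp only [Fin.snoc_last]; fun_prop
  · simp only [Fin.snoc_castSucc]; fun_prop

lemma hausdorffMeasure_capCap_inter_pos (hθ : θ ∈ Ioc 0 (π / 2)) {U : Set (V n)}
    (hU : IsOpen U) {ζ : V n} (hζ : ζ ∈ capCap n θ) (hζU : ζ ∈ U) :
    0 < μH[(n : ℝ)] (capCap n θ ∩ U) := by
  have hcos : 0 ≤ Real.cos θ := Real.cos_nonneg_of_mem_Icc ⟨by linarith [hθ.1, pi_pos], hθ.2⟩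
  have hsin : 0 < Real.sin θ := Real.sin_pos_of_pos_of_lt_pi hθ.1 (by linarith [hθ.2, pi_pos])
  have hsc := Real.sin_sq_add_cos_sq θ
  set W : Set (Fin n → ℝ) := {x | ∑ j, x j ^ 2 < Real.sin θ ^ 2} with hW
  have hWo : IsOpen W := isOpen_lt (by fun_prop) continuous_const
  have hcap : ∀ x ∈ W, capGraph n θ x ∈ capCap n θ := by
    intro x hx
    have hx : ∑ j, x j ^ 2 < Real.sin θ ^ 2 := hx
    refine ⟨?_, ?_⟩
    · simp only [capGraph, Fin.snoc_last, sub_nonneg]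
      exact Real.le_sqrt_of_sq_le (by linarith)
    · rw [← sq_eq_sq₀ (norm_nonneg _) zero_le_one, norm_sq_eq_sum_add]
      simp [capGraph, Etop_last, Etop_castSucc]
      rw [Real.sq_sqrt (by nlinarith)]
      ring
  set x₀ : Fin n → ℝ := fun i => ζ i.castSucc with hx₀
  have hsum := norm_sq_eq_sum_add (ζ + Real.cos θ • Etop n)
  rw [hζ.2] at hsum
  simp [Etop_last, Etop_castSucc] at hsum
  have hl := hζ.1
  have hG₀ : capGraph n θ x₀ = ζ := by
    ext i
    refine Fin.lastCases ?_ (fun i => ?_) i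
    · simp only [capGraph, Fin.snoc_last, hx₀]
      rw [show 1 - ∑ j : Fin n, ζ j.castSucc ^ 2 = (ζ (Fin.last n) + Real.cos θ) ^ 2 by linarith,
        Real.sqrt_sq (by linarith)]
      ring
    · simp only [capGraph, Fin.snoc_castSucc, hx₀]
  have hx₀s : ∑ j, x₀ j ^ 2 ≤ Real.sin θ ^ 2 := by
    simp only [hx₀]; nlinarith
  obtain ⟨t, ht0, ht1, htU⟩ : ∃ t : ℝ, 0 ≤ t ∧ t < 1 ∧ capGraph n θ (t • x₀) ∈ U := by
    have hc : Continuous fun t : ℝ => capGraph n θ (t • x₀) :=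
      continuous_capGraph.comp (by fun_prop)
    have h1 : ∀ᶠ t in nhdsWithin (1 : ℝ) (Iio 1), capGraph n θ (t • x₀) ∈ U :=
      nhdsWithin_le_nhds (hc.continuousAt.eventually
        (hU.mem_nhds (by simpa [hG₀] using hζU)))
    have h2 : ∀ᶠ t in nhdsWithin (1 : ℝ) (Iio 1), (0 : ℝ) < t :=
      nhdsWithin_le_nhds (lt_mem_nhds one_pos)
    obtain ⟨t, ⟨h1, h2⟩, h3⟩ := ((h1.and h2).and self_mem_nhdsWithin).exists
    exact ⟨t, h2.le, h3, h1⟩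
  have hopen : IsOpen (W ∩ capGraph n θ ⁻¹' U) := hWo.inter (hU.preimage continuous_capGraph)
  have hne : (W ∩ capGraph n θ ⁻¹' U).Nonempty := by
    refine ⟨t • x₀, ?_, htU⟩
    have : ∑ j, (t • x₀) j ^ 2 = t ^ 2 * ∑ j, x₀ j ^ 2 := by
      simp [mul_pow, Finset.mul_sum]
    simp only [hW, mem_ofPred_eq, this]
    have h4 : t ^ 2 < 1 := by nlinarith
    nlinarith [pow_pos hsin 2]
  have hproj : LipschitzWith 1 (fun u : V n => fun i : Fin n => u i.castSucc) := by
    refine LipschitzWith.of_dist_le_mul fun u w => ?_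
    rw [NNReal.coe_one, one_mul, dist_pi_le_iff dist_nonneg]
    intro i
    rw [dist_eq_norm, dist_eq_norm]
    exact PiLp.norm_apply_le (u - w) i.castSucc
  have h1 : 0 < μH[(n : ℝ)] (W ∩ capGraph n θ ⁻¹' U) := by
    rw [hausdorffMeasure_pi_fin]
    exact hopen.measure_pos _ hne
  refine h1.trans_le ?_
  have h2 := hproj.hausdorffMeasure_image_le (d := n) (by positivity) (capCap n θ ∩ U)
  simp only [ENNReal.coe_one, ENNReal.one_rpow, one_mul] at h2
  refine (measure_mono ?_).trans h2
  rintro x ⟨hxW, hxU⟩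
  exact ⟨capGraph n θ x, ⟨hcap x hxW, hxU⟩, by ext i; simp [capGraph]⟩

/-- The surface measure of the cap. -/
def capMeasure (n : ℕ) (θ : ℝ) : Measure (V n) := μH[(n : ℝ)].restrict (capCap n θ)

lemma isFiniteMeasure_capMeasure (hθ : θ ∈ Ioc 0 (π / 2)) : IsFiniteMeasure (capMeasure n θ) :=
  ⟨by simpa [capMeasure] using hausdorffMeasure_capCap_lt_top hθ⟩

lemma capMeasure_restrict : (capMeasure n θ).restrict (capCap n θ) = capMeasure n θ := by
  rw [capMeasure, Measure.restrict_restrict isClosed_capCap.measurableSet, inter_self]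

lemma integrable_capMeasure (hθ : θ ∈ Ioc 0 (π / 2)) {E : Type*} [NormedAddCommGroup E]
    [SecondCountableTopology E] {h : V n → E} (hh : Continuous h) :
    Integrable h (capMeasure n θ) := by
  have := isFiniteMeasure_capMeasure (n := n) hθ
  rw [← capMeasure_restrict]
  exact hh.continuousOn.integrableOn_compact isCompact_capCap

lemma continuous_integral_capMeasure (hθ : θ ∈ Ioc 0 (π / 2)) {X : Type*} [TopologicalSpace X]
    [FirstCountableTopology X] [LocallyCompactSpace X] {F : X × V n → ℝ} (hF : Continuous F) :
    Continuous fun x => ∫ ζ, F (x, ζ) ∂capMeasure n θ := by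
  have := isFiniteMeasure_capMeasure (n := n) hθ
  rw [← capMeasure_restrict]
  exact continuous_parametric_integral_of_continuous (f := fun x ζ => F (x, ζ)) hF isCompact_capCap

lemma ae_mem_capCap : ∀ᵐ ζ ∂capMeasure n θ, ζ ∈ capCap n θ :=
  ae_restrict_mem isClosed_capCap.measurableSet

lemma integral_capMeasure_pos (hθ : θ ∈ Ioc 0 (π / 2)) {h : V n → ℝ} (hh : Continuous h)
    (h0 : ∀ ζ ∈ capCap n θ, 0 ≤ h ζ) {ζ : V n} (hζ : ζ ∈ capCap n θ) (hpos : 0 < h ζ) :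
    0 < ∫ ζ, h ζ ∂capMeasure n θ := by
  rw [integral_pos_iff_support_of_nonneg_ae (ae_mem_capCap.mono h0) (integrable_capMeasure hθ hh),
    capMeasure, Measure.restrict_apply' isClosed_capCap.measurableSet, inter_comm]
  exact hausdorffMeasure_capCap_inter_pos hθ hh.isOpen_support hζ hpos.ne'

/-! ### Reflections -/

/-- The reflection in the hyperplane orthogonal to `v`. -/
def mirror (v : V n) : V n ≃ₗᵢ[ℝ] V n := (ℝ ∙ v)ᗮ.reflection

lemma mirror_apply {v : V n} (hv : ‖v‖ = 1) (ζ : V n) : mirror v ζ = ζ - (2 * ⟪v, ζ⟫) • v := by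
  rw [mirror, Submodule.reflection_orthogonal_apply, Submodule.reflection_singleton_apply]
  simp only [hv, RCLike.ofReal_real_eq_id, id, one_pow, div_one]
  module

lemma mirror_mirror (v ζ : V n) : mirror v (mirror v ζ) = ζ := Submodule.reflection_reflection _ ζ

lemma inner_mirror {v : V n} (hv : ‖v‖ = 1) (ζ : V n) : ⟪v, mirror v ζ⟫ = -⟪v, ζ⟫ := by
  rw [mirror_apply hv, inner_sub_right, real_inner_smul_right, real_inner_self_eq_norm_sq, hv]
  ring

lemma mirror_mem_capCap {v : V n} (hv : ‖v‖ = 1) (hv0 : v (Fin.last n) = 0) {ζ : V n}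
    (hζ : ζ ∈ capCap n θ) : mirror v ζ ∈ capCap n θ := by
  have hE : mirror v (Etop n) = Etop n := by simp [mirror_apply hv, inner_Etop, hv0]
  refine ⟨?_, ?_⟩
  · have := hζ.1
    simp [mirror_apply hv, hv0, this]
  · rw [← hζ.2, ← (mirror v).norm_map (ζ + _), map_add, map_smul, hE]

lemma integral_mirror {v : V n} (hv : ‖v‖ = 1) (hv0 : v (Fin.last n) = 0) (h : V n → ℝ) :
    ∫ ζ, h (mirror v ζ) ∂capMeasure n θ = ∫ ζ, h ζ ∂capMeasure n θ := by
  have hpre : mirror v ⁻¹' capCap n θ = capCap n θ := by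
    ext ζ
    refine ⟨fun hζ => ?_, mirror_mem_capCap hv hv0⟩
    rw [← mirror_mirror v ζ]
    exact mirror_mem_capCap hv hv0 hζ
  have hmp := ((mirror v).toIsometryEquiv.measurePreserving_hausdorffMeasure (n : ℝ)).restrict_preimage
    (isClosed_capCap (n := n) (θ := θ)).measurableSet
  have hpre' : (mirror v).toIsometryEquiv ⁻¹' capCap n θ = capCap n θ := hpre
  rw [hpre'] at hmp
  exact hmp.integral_comp (mirror v).toHomeomorph.measurableEmbedding h

lemma capSupp_le_mirror (hK : IsCompact K) {v z : V n} (hv : ‖v‖ = 1) (hz : z ∈ K)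
    (hmax : ∀ x ∈ K, ⟪v, x⟫ ≤ ⟪v, z⟫) {ζ : V n} (hζ : 0 ≤ ⟪v, ζ⟫) :
    capSupp n θ K z ζ ≤ capSupp n θ K z (mirror v ζ) := by
  rw [capSupp, capSupp, mirror_apply hv]
  set u' := ζ - (2 * ⟪v, ζ⟫) • v + Real.cos θ • Etop n with hu'
  have hu : ζ + Real.cos θ • Etop n = u' + (2 * ⟪v, ζ⟫) • v := by rw [hu']; abel
  have : suppFn n K (ζ + Real.cos θ • Etop n) ≤ suppFn n K u' + 2 * ⟪v, ζ⟫ * ⟪v, z⟫ := by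
    refine suppFn_le ⟨z, hz⟩ fun x hx => ?_
    rw [hu, inner_add_left, real_inner_smul_left]
    exact add_le_add (inner_le_suppFn hK _ hx)
      (mul_le_mul_of_nonneg_left (hmax x hx) (by positivity))
  rw [inner_sub_left, real_inner_smul_left]
  linarith

lemma two_mul_integral_inner (hθ : θ ∈ Ioc 0 (π / 2)) (hK : IsCompact K) {v : V n} (hv : ‖v‖ = 1)
    (hv0 : v (Fin.last n) = 0) (z : V n) {g : ℝ → ℝ} (hg : Continuous g) :
    2 * ∫ ζ, g (capSupp n θ K z ζ) * ⟪v, ζ⟫ ∂capMeasure n θ =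
      ∫ ζ, (g (capSupp n θ K z ζ) - g (capSupp n θ K z (mirror v ζ))) * ⟪v, ζ⟫ ∂capMeasure n θ := by
  have hc : Continuous (capSupp n θ K z) := continuous_capSupp_right hK z
  have hr : Continuous (mirror v) := (mirror v).continuous
  have h := integral_mirror (θ := θ) hv hv0 fun ζ => g (capSupp n θ K z ζ) * ⟪v, ζ⟫
  simp only [inner_mirror hv, mul_neg, integral_neg] at h
  simp only [sub_mul]
  have i1 : Integrable (fun ζ => g (capSupp n θ K z ζ) * ⟪v, ζ⟫) (capMeasure n θ) :=
    integrable_capMeasure hθ (by fun_prop)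
  have i2 : Integrable (fun ζ => g (capSupp n θ K z (mirror v ζ)) * ⟪v, ζ⟫) (capMeasure n θ) :=
    integrable_capMeasure hθ (by fun_prop)
  rw [integral_sub i1 i2]
  linarith

lemma sub_mirror_mul_inner_nonpos (hK : IsCompact K) {v z : V n} (hv : ‖v‖ = 1) (hz : z ∈ K)
    (hmax : ∀ x ∈ K, ⟪v, x⟫ ≤ ⟪v, z⟫) {g : ℝ → ℝ} (hg : Monotone g) (ζ : V n) :
    (g (capSupp n θ K z ζ) - g (capSupp n θ K z (mirror v ζ))) * ⟪v, ζ⟫ ≤ 0 := by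
  rcases le_total 0 ⟪v, ζ⟫ with h | h
  · have := hg (capSupp_le_mirror (θ := θ) hK hv hz hmax h)
    nlinarith
  · have h' : 0 ≤ ⟪v, mirror v ζ⟫ := by rw [inner_mirror hv]; linarith
    have := hg (capSupp_le_mirror (θ := θ) hK hv hz hmax h')
    rw [mirror_mirror] at this
    nlinarith

lemma integral_inner_nonpos (hθ : θ ∈ Ioc 0 (π / 2)) (hK : IsCompact K) {v z : V n}
    (hv : ‖v‖ = 1) (hv0 : v (Fin.last n) = 0) (hz : z ∈ K)
    (hmax : ∀ x ∈ K, ⟪v, x⟫ ≤ ⟪v, z⟫) {g : ℝ → ℝ} (hg : Continuous g) (hm : Monotone g) :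
    ∫ ζ, g (capSupp n θ K z ζ) * ⟪v, ζ⟫ ∂capMeasure n θ ≤ 0 := by
  have h := two_mul_integral_inner hθ hK hv hv0 z hg
  have := integral_nonpos (μ := capMeasure n θ) (f := fun ζ =>
    (g (capSupp n θ K z ζ) - g (capSupp n θ K z (mirror v ζ))) * ⟪v, ζ⟫)
    fun ζ => sub_mirror_mul_inner_nonpos hK hv hz hmax hm ζ
  linarith

lemma sin_smul_mem_capCap {v : V n} (hv : ‖v‖ = 1) (hv0 : v (Fin.last n) = 0) :
    Real.sin θ • v ∈ capCap n θ := by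
  refine ⟨by simp [hv0], ?_⟩
  rw [← sq_eq_sq₀ (norm_nonneg _) zero_le_one, norm_add_sq_real, norm_smul, norm_smul, norm_Etop,
    hv, real_inner_smul_left, real_inner_smul_right, inner_Etop, hv0]
  simp [Real.sin_sq_add_cos_sq]

lemma integral_inner_neg (hθ : θ ∈ Ioc 0 (π / 2)) (hK : IsCompact K) {v z : V n}
    (hv : ‖v‖ = 1) (hv0 : v (Fin.last n) = 0) (hz : z ∈ K)
    (hmax : ∀ x ∈ K, ⟪v, x⟫ ≤ ⟪v, z⟫) {g : ℝ → ℝ} (hg : Continuous g) (hm : Monotone g)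
    (hlt : g (capSupp n θ K z (Real.sin θ • v)) < g (capSupp n θ K z (-(Real.sin θ • v)))) :
    ∫ ζ, g (capSupp n θ K z ζ) * ⟪v, ζ⟫ ∂capMeasure n θ < 0 := by
  have hsin : 0 < Real.sin θ := Real.sin_pos_of_pos_of_lt_pi hθ.1 (by linarith [hθ.2, pi_pos])
  have hc : Continuous (capSupp n θ K z) := continuous_capSupp_right hK z
  have hr : Continuous (mirror v) := (mirror v).continuous
  have h := two_mul_integral_inner hθ hK hv hv0 z hg
  have := integral_capMeasure_pos hθ (h := fun ζ =>
    -((g (capSupp n θ K z ζ) - g (capSupp n θ K z (mirror v ζ))) * ⟪v, ζ⟫)) (by fun_prop)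
    (fun ζ _ => neg_nonneg.2 (sub_mirror_mul_inner_nonpos hK hv hz hmax hm ζ))
    (sin_smul_mem_capCap hv hv0) (by
      have h1 : ⟪v, Real.sin θ • v⟫ = Real.sin θ := by
        rw [real_inner_smul_right, real_inner_self_eq_norm_sq, hv]; ring
      have h2 : mirror v (Real.sin θ • v) = -(Real.sin θ • v) := by
        rw [mirror_apply hv, h1]; module
      rw [h1, h2]
      nlinarith)
  rw [integral_neg] at this
  linarith

/-! ### The variational inequality -/

lemma intervalIntegral_sub_le {f : ℝ → ℝ} (hf : Continuous f) (hm : Monotone f) (a b : ℝ) :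
    (∫ x in (0 : ℝ)..b, f x) - ∫ x in (0 : ℝ)..a, f x ≤ f b * (b - a) := by
  have hi : ∀ p q : ℝ, IntervalIntegrable f volume p q := fun p q => hf.intervalIntegrable p q
  rw [intervalIntegral.integral_interval_sub_left (hi _ _) (hi _ _)]
  rcases le_total a b with h | h
  · have := intervalIntegral.integral_mono_on (g := fun _ => f b) h (hi a b)
      intervalIntegrable_const (fun x hx => hm hx.2)
    rw [intervalIntegral.integral_const, smul_eq_mul] at this
    linarith
  · have := intervalIntegral.integral_mono_on (f := fun _ => f b) h
      intervalIntegrable_const (hi b a) (fun x hx => hm hx.1)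
    rw [intervalIntegral.integral_const, smul_eq_mul] at this
    rw [intervalIntegral.integral_symm]
    linarith

lemma exists_variational (hθ : θ ∈ Ioc 0 (π / 2)) (hK : IsCompact K) (hc : Convex ℝ K)
    (hne : ∃ z ∈ K, z (Fin.last n) = 0) {f : ℝ → ℝ} (hf : Continuous f) (hm : Monotone f) :
    ∃ z ∈ K, z (Fin.last n) = 0 ∧ ∀ y ∈ K, y (Fin.last n) = 0 →
      0 ≤ ∫ ζ, f (capSupp n θ K z ζ) * (capSupp n θ K y ζ - capSupp n θ K z ζ)
        ∂capMeasure n θ := by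
  have ha := continuous_capSupp (θ := θ) hK
  have ha' : ∀ z, Continuous (capSupp n θ K z) := continuous_capSupp_right hK
  have hΨ : Continuous fun b : ℝ => ∫ x in (0 : ℝ)..b, f x :=
    intervalIntegral.continuous_primitive (fun _ _ => hf.intervalIntegrable _ _) 0
  have hbase : IsCompact (K ∩ {z | z (Fin.last n) = 0}) :=
    hK.inter_right (isClosed_eq (by fun_prop) continuous_const)
  obtain ⟨z₀, hz₀, hz₀'⟩ := hne
  have hF : Continuous fun z : V n => ∫ ζ, (∫ x in (0 : ℝ)..capSupp n θ K z ζ, f x)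
      ∂capMeasure n θ :=
    continuous_integral_capMeasure (F := fun q => ∫ x in (0 : ℝ)..capSupp n θ K q.1 q.2, f x) hθ
      (hΨ.comp ha)
  obtain ⟨z, ⟨hz, hz'⟩, hmin⟩ := hbase.exists_isMinOn ⟨z₀, hz₀, hz₀'⟩ hF.continuousOn
  refine ⟨z, hz, hz', fun y hy hy' => ?_⟩
  have hz' : z (Fin.last n) = 0 := hz'
  have hcont : Continuous fun t : ℝ => ∫ ζ, f (capSupp n θ K (z + t • (y - z)) ζ) *
      (capSupp n θ K y ζ - capSupp n θ K z ζ) ∂capMeasure n θ := by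
    refine continuous_integral_capMeasure (F := fun q : ℝ × V n =>
      f (capSupp n θ K (z + q.1 • (y - z)) q.2) * (capSupp n θ K y q.2 - capSupp n θ K z q.2))
      hθ ?_
    have h1 : Continuous fun q : ℝ × V n => capSupp n θ K (z + q.1 • (y - z)) q.2 :=
      ha.comp (f := fun q : ℝ × V n => (z + q.1 • (y - z), q.2)) (by fun_prop)
    have h2 := ha' y
    have h3 := ha' z
    fun_prop
  have hlim := (hcont.tendsto 0).mono_left (nhdsWithin_le_nhds (s := Ioi 0))
  simp only [zero_smul, add_zero] at hlim
  refine ge_of_tendsto hlim ?_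
  filter_upwards [Ioc_mem_nhdsGT (zero_lt_one' ℝ)] with t ht
  have hmem : z + t • (y - z) ∈ K ∩ {z | z (Fin.last n) = 0} :=
    ⟨hc.add_smul_sub_mem hz hy ⟨ht.1.le, ht.2⟩, by simp [hz', hy']⟩
  have h1 : ∫ ζ, (∫ x in (0 : ℝ)..capSupp n θ K z ζ, f x) ∂capMeasure n θ ≤
    ∫ ζ, (∫ x in (0 : ℝ)..capSupp n θ K (z + t • (y - z)) ζ, f x) ∂capMeasure n θ := hmin hmem
  have i1 := integrable_capMeasure hθ (hΨ.comp (ha' z))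
  have i2 := integrable_capMeasure hθ (hΨ.comp (ha' (z + t • (y - z))))
  simp only [Function.comp_def] at i1 i2
  rw [← sub_nonneg, ← integral_sub i2 i1] at h1
  have h2 : ∫ ζ, ((∫ x in (0 : ℝ)..capSupp n θ K (z + t • (y - z)) ζ, f x) -
      ∫ x in (0 : ℝ)..capSupp n θ K z ζ, f x) ∂capMeasure n θ ≤
      ∫ ζ, t * (f (capSupp n θ K (z + t • (y - z)) ζ) *
      (capSupp n θ K y ζ - capSupp n θ K z ζ)) ∂capMeasure n θ := by
    have c1 := ha' y
    have c2 := ha' z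
    have c3 := ha' (z + t • (y - z))
    refine integral_mono (i2.sub i1) (integrable_capMeasure hθ (by fun_prop)) fun ζ => ?_
    refine (intervalIntegral_sub_le hf hm _ _).trans_eq ?_
    rw [show capSupp n θ K (z + t • (y - z)) ζ - capSupp n θ K z ζ =
      t * (capSupp n θ K y ζ - capSupp n θ K z ζ) by rw [capSupp_segment]; ring]
    ring
  rw [integral_const_mul] at h2
  exact nonneg_of_mul_nonneg_right (h1.trans h2) ht.1

/-- The function `f`, frozen to the left of `ε`. -/
def trunc (f : ℝ → ℝ) (ε x : ℝ) : ℝ := f (max x ε)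

lemma trunc_of_le {f : ℝ → ℝ} {ε x : ℝ} (h : ε ≤ x) : trunc f ε x = f x := by
  rw [trunc, max_eq_left h]

lemma continuous_trunc {f : ℝ → ℝ} (hf : ContinuousOn f (Ioi 0)) {ε : ℝ} (hε : 0 < ε) :
    Continuous (trunc f ε) :=
  hf.comp_continuous (by fun_prop) fun x => lt_max_of_lt_right hε

lemma monotone_trunc {f : ℝ → ℝ} (hf : MonotoneOn f (Ioi 0)) {ε : ℝ} (hε : 0 < ε) :
    Monotone (trunc f ε) := fun _ _ h =>
  hf (lt_max_of_lt_right hε) (lt_max_of_lt_right hε) (max_le_max_right ε h)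

lemma trunc_mul_le {f : ℝ → ℝ} (hf : MonotoneOn f (Ioi 0)) {δ ε a b : ℝ} (hδ : 0 < δ)
    (hδε : δ ≤ ε) (hb : ε ≤ b) : trunc f δ a * (b - a) ≤ trunc f ε a * (b - a) := by
  rcases le_total ε a with h | h
  · rw [trunc_of_le h, trunc_of_le (hδε.trans h)]
  · exact mul_le_mul_of_nonneg_right (hf (lt_max_of_lt_right hδ)
      (lt_max_of_lt_right (hδ.trans_le hδε)) (max_le_max_left a hδε)) (by linarith)

/-- A generalized solution, in the closed base, of the variational inequality for a possibly
singular monotone function `f`. -/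
lemma exists_variational_singular (hθ : θ ∈ Ioc 0 (π / 2)) (hK : IsCompact K) (hc : Convex ℝ K)
    (hne : ∃ z ∈ K, z (Fin.last n) = 0) {f : ℝ → ℝ} (hf : ContinuousOn f (Ioi 0))
    (hm : MonotoneOn f (Ioi 0)) :
    ∃ z ∈ K, z (Fin.last n) = 0 ∧ ∀ y ∈ K, y (Fin.last n) = 0 →
      ∀ ε > 0, (∀ ζ ∈ capCap n θ, ε ≤ capSupp n θ K y ζ) →
      0 ≤ ∫ ζ, trunc f ε (capSupp n θ K z ζ) * (capSupp n θ K y ζ - capSupp n θ K z ζ)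
        ∂capMeasure n θ := by
  have ha := continuous_capSupp (θ := θ) hK
  have ha' : ∀ z, Continuous (capSupp n θ K z) := continuous_capSupp_right hK
  have hpos : ∀ k : ℕ, (0 : ℝ) < 1 / (k + 1) := fun k => by positivity
  choose w hwK hw0 hw using fun k : ℕ => exists_variational hθ hK hc hne
    (continuous_trunc hf (hpos k)) (monotone_trunc hm (hpos k))
  obtain ⟨z, hz, φ, hφ, hlim⟩ := hK.tendsto_subseq hwK
  have hz0 : z (Fin.last n) = 0 := by
    have h : Continuous fun z : V n => z (Fin.last n) := by fun_prop
    refine tendsto_nhds_unique ((h.tendsto z).comp hlim) ?_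
    simp only [Function.comp_def, hw0]
    exact tendsto_const_nhds
  refine ⟨z, hz, hz0, fun y hy hy0 ε hε hyε => ?_⟩
  have c0 := continuous_trunc hf hε
  have c1 := ha' y
  have hcont : Continuous fun z : V n => ∫ ζ, trunc f ε (capSupp n θ K z ζ) *
      (capSupp n θ K y ζ - capSupp n θ K z ζ) ∂capMeasure n θ :=
    continuous_integral_capMeasure (F := fun q : V n × V n => trunc f ε (capSupp n θ K q.1 q.2) *
      (capSupp n θ K y q.2 - capSupp n θ K q.1 q.2)) hθ (by fun_prop)
  refine ge_of_tendsto ((hcont.tendsto z).comp hlim) ?_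
  have hev : ∀ᶠ k in Filter.atTop, 1 / ((φ k : ℝ) + 1) ≤ ε :=
    (tendsto_one_div_add_atTop_nhds_zero_nat.comp hφ.tendsto_atTop).eventually_le_const hε
  filter_upwards [hev] with k hk
  refine (hw (φ k) y hy hy0).trans (integral_mono_ae ?_ ?_ ?_)
  · have := continuous_trunc hf (hpos (φ k))
    have := ha' (w (φ k))
    exact integrable_capMeasure hθ (by fun_prop)
  · have := ha' (w (φ k))
    exact integrable_capMeasure hθ (by dsimp only [Function.comp]; fun_prop)
  · filter_upwards [ae_mem_capCap] with ζ hζ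
    exact trunc_mul_le hm (hpos (φ k)) hk (hyε ζ hζ)

lemma IsCapBody.exists_le_capSupp (hθ : θ ∈ Ioc 0 (π / 2)) (hK : IsCapBody n θ K) {y : V n}
    (hy : y ∈ relintBase n K) : ∃ ε > 0, ∀ ζ ∈ capCap n θ, ε ≤ capSupp n θ K y ζ := by
  have hc : Continuous (capSupp n θ K y) := continuous_capSupp_right hK.1 y
  rcases (capCap n θ).eq_empty_or_nonempty with h | h
  · exact ⟨1, one_pos, by simp [h]⟩
  · obtain ⟨ζ, hζ, hmin⟩ := isCompact_capCap.exists_isMinOn h hc.continuousOn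
    exact ⟨_, hK.capSupp_pos hθ hζ hy, fun η hη => hmin hη⟩

/-! ### Supporting half-spaces of the base -/

lemma convex_relintBase (hc : Convex ℝ K) : Convex ℝ (relintBase n K) := by
  intro x hx y hy a b ha hb hab
  rcases hb.eq_or_lt with rfl | hb
  · have : a = 1 := by linarith
    simpa [this] using hx
  · have := relintBase_segment hc (relintBase_subset hx) hx.1 hy hb (by linarith)
    rwa [show a • x + b • y = x + b • (y - x) by
      rw [show a = 1 - b by linarith]; module]

lemma exists_supporting (hc : Convex ℝ K) (hne : (relintBase n K).Nonempty) {z : V n}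
    (hz0 : z (Fin.last n) = 0) (hz : z ∉ relintBase n K) :
    ∃ v : V n, ‖v‖ = 1 ∧ v (Fin.last n) = 0 ∧ ∀ p ∈ relintBase n K, ⟪v, p⟫ < ⟪v, z⟫ := by
  let L : V n →ₗ[ℝ] V n :=
    { toFun := fun x => x - x (Fin.last n) • Etop n
      map_add' := fun x y => by simp only [PiLp.add_apply]; module
      map_smul' := fun c x => by simp only [PiLp.smul_apply, smul_eq_mul, RingHom.id_apply]; module }
  have hL : ∀ x, L x = x - x (Fin.last n) • Etop n := fun _ => rfl
  have hL0 : ∀ x, x (Fin.last n) = 0 → L x = x := fun x hx => by simp [hL, hx]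
  have hLc : Continuous L := L.continuous_of_finiteDimensional
  have hconv : Convex ℝ (L ⁻¹' relintBase n K) := (convex_relintBase hc).linear_preimage L
  have hopen : IsOpen (L ⁻¹' relintBase n K) := by
    rw [isOpen_iff_mem_nhds]
    rintro x ⟨-, ε, hε, h⟩
    filter_upwards [hLc.continuousAt.preimage_mem_nhds (Metric.ball_mem_nhds (L x) (half_pos hε))]
      with x' hx'
    refine ⟨by simp [hL, Etop_last], ε / 2, half_pos hε, fun y hy0 hy => h y hy0 ?_⟩
    have hx' : ‖L x' - L x‖ < ε / 2 := by rw [← dist_eq_norm]; exact hx'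
    have := norm_sub_le_norm_sub_add_norm_sub y (L x') (L x)
    linarith
  obtain ⟨f, hf⟩ := geometric_hahn_banach_open_point hconv hopen (x := z)
    (by rwa [mem_preimage, hL0 z hz0])
  set w := (InnerProductSpace.toDual ℝ (V n)).symm f with hw
  have hfw : ∀ x, f x = ⟪w, x⟫ := fun x => by simp [hw]
  obtain ⟨p, hp⟩ := hne
  have hw0 : w (Fin.last n) = 0 := by
    by_contra hne
    have := hf (p + ((⟪w, z⟫ - ⟪w, p⟫) / w (Fin.last n)) • Etop n) (by
      rw [mem_preimage, hL]
      simpa [Etop_last, hp.1] using hp)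
    rw [hfw, hfw, inner_add_right, real_inner_smul_right, inner_Etop, div_mul_cancel₀ _ hne] at this
    linarith
  have hlt : ∀ p ∈ relintBase n K, ⟪w, p⟫ < ⟪w, z⟫ := fun p hp => by
    rw [← hfw, ← hfw]
    exact hf p (by rwa [mem_preimage, hL0 p hp.1])
  have hwn : w ≠ 0 := by
    intro h
    simpa [h] using hlt p hp
  have hpos : 0 < ‖w‖ := norm_pos_iff.2 hwn
  refine ⟨‖w‖⁻¹ • w, by simp [norm_smul, hpos.ne'], by simp [hw0], fun p hp => ?_⟩
  rw [real_inner_smul_left, real_inner_smul_left]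
  exact mul_lt_mul_of_pos_left (hlt p hp) (by positivity)

lemma IsCapBody.inner_le_of_relint (hθ : θ ∈ Ioc 0 (π / 2)) (hK : IsCapBody n θ K) {v z : V n}
    (hv : v (Fin.last n) = 0) (hm : ∀ p ∈ relintBase n K, ⟪v, p⟫ ≤ ⟪v, z⟫) :
    ∀ x ∈ K, ⟪v, x⟫ ≤ ⟪v, z⟫ := by
  obtain ⟨p, hp⟩ := hK.2.2.2.2.2.2
  refine fun x hx => hK.inner_le_of_base hθ hv (fun y hy hy0 => ?_) hx
  have hcont : Continuous fun t : ℝ => ⟪v, y + t • (p - y)⟫ := by fun_prop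
  have hlim := (hcont.tendsto 0).mono_left (nhdsWithin_le_nhds (s := Ioi 0))
  simp only [zero_smul, add_zero] at hlim
  refine le_of_tendsto hlim ?_
  filter_upwards [Ioc_mem_nhdsGT (zero_lt_one' ℝ)] with t ht
  exact hm _ (relintBase_segment hK.2.1 hy hy0 hp ht.1 ht.2)

/-! ### Existence and uniqueness -/

lemma integral_trunc (f : ℝ → ℝ) {ε : ℝ} {z : V n}
    (h : ∀ ζ ∈ capCap n θ, ε ≤ capSupp n θ K z ζ) (g : V n → ℝ) :
    ∫ ζ, f (capSupp n θ K z ζ) * g ζ ∂capMeasure n θ =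
      ∫ ζ, trunc f ε (capSupp n θ K z ζ) * g ζ ∂capMeasure n θ :=
  integral_congr_ae (ae_mem_capCap.mono fun ζ hζ => by simp only [trunc_of_le (h ζ hζ)])

/-- The base-parallel part of the weighted moment vector. -/
def moment (n : ℕ) (θ : ℝ) (K : Set (V n)) (g : ℝ → ℝ) (z : V n) : V n :=
  ∫ ζ, g (capSupp n θ K z ζ) • (ζ - ζ (Fin.last n) • Etop n) ∂capMeasure n θ

lemma inner_moment (hθ : θ ∈ Ioc 0 (π / 2)) (hK : IsCompact K) {g : ℝ → ℝ} (hg : Continuous g)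
    (z w : V n) : ⟪w, moment n θ K g z⟫ =
      ∫ ζ, g (capSupp n θ K z ζ) * ⟪w, ζ - ζ (Fin.last n) • Etop n⟫ ∂capMeasure n θ := by
  have hc := continuous_capSupp_right (θ := θ) hK z
  have hi : Integrable (fun ζ : V n => g (capSupp n θ K z ζ) • (ζ - ζ (Fin.last n) • Etop n))
    (capMeasure n θ) := integrable_capMeasure hθ (by fun_prop)
  rw [moment, ← integral_inner hi]
  simp only [real_inner_smul_right]

lemma inner_moment_of_horizontal (hθ : θ ∈ Ioc 0 (π / 2)) (hK : IsCompact K) {g : ℝ → ℝ}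
    (hg : Continuous g) (z : V n) {w : V n} (hw : w (Fin.last n) = 0) : ⟪w, moment n θ K g z⟫ =
      ∫ ζ, g (capSupp n θ K z ζ) * ⟪w, ζ⟫ ∂capMeasure n θ := by
  rw [inner_moment hθ hK hg]
  simp only [inner_sub_right, real_inner_smul_right, inner_Etop, hw, mul_zero, sub_zero]

lemma moment_last (hθ : θ ∈ Ioc 0 (π / 2)) (hK : IsCompact K) {g : ℝ → ℝ} (hg : Continuous g)
    (z : V n) : moment n θ K g z (Fin.last n) = 0 := by
  rw [← Etop_inner, inner_moment hθ hK hg]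
  simp [Etop_inner, Etop_last]

/-- A sequence of horizontal moment vectors of truncations cannot satisfy the limiting
variational inequality at a boundary point of the base. -/
lemma IsCapBody.mem_relintBase_of_moment (hθ : θ ∈ Ioc 0 (π / 2)) (hK : IsCapBody n θ K)
    {f : ℝ → ℝ} (hf : ContinuousOn f (Ioi 0)) (hm : StrictMonoOn f (Ioi 0)) {z : V n} (hz : z ∈ K)
    (hz0 : z (Fin.last n) = 0)
    (hvar : ∀ y ∈ relintBase n K, ∀ᶠ k : ℕ in Filter.atTop,
      ⟪y - z, moment n θ K (trunc f (1 / ((k : ℝ) + 1))) z⟫ ≤ 0) : z ∈ relintBase n K := by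
  by_contra hzn
  have hcomp := hK.1
  have hpos : ∀ k : ℕ, (0 : ℝ) < 1 / (k + 1) := fun k => by positivity
  set H : ℕ → V n := fun k => moment n θ K (trunc f (1 / ((k : ℝ) + 1))) z with hH
  have hHin : ∀ k {w : V n}, w (Fin.last n) = 0 → ⟪w, H k⟫ = _ := fun k w hw =>
    inner_moment_of_horizontal hθ hcomp (continuous_trunc hf (hpos k)) z hw
  have hH0 : ∀ k, H k (Fin.last n) = 0 := fun k =>
    moment_last hθ hcomp (continuous_trunc hf (hpos k)) z
  have hne : ∀ᶠ k in Filter.atTop, H k ≠ 0 := by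
    obtain ⟨p, hp⟩ := hK.2.2.2.2.2.2
    obtain ⟨v, hv, hv0, hlt⟩ := exists_supporting hK.2.1 ⟨p, hp⟩ hz0 hzn
    have hmax := hK.inner_le_of_relint hθ hv0 fun q hq => (hlt q hq).le
    have hsin : 0 < Real.sin θ := Real.sin_pos_of_pos_of_lt_pi hθ.1 (by linarith [hθ.2, pi_pos])
    have h1 : capSupp n θ K z (Real.sin θ • v) = 0 := by
      have hs : suppFn n K v = ⟪v, z⟫ :=
        le_antisymm (suppFn_le ⟨z, hz⟩ hmax) (inner_le_suppFn hcomp v hz)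
      rw [capSupp, hK.2.2.2.2.2.1 v hv hv0, hs, real_inner_smul_left, sub_self]
    have h2 : 0 < capSupp n θ K z (-(Real.sin θ • v)) := by
      have := inner_le_suppFn hcomp (-(Real.sin θ • v) + Real.cos θ • Etop n)
        (relintBase_subset hp)
      rw [inner_add_smul_Etop hp.1, inner_neg_left, real_inner_smul_left] at this
      rw [capSupp, inner_neg_left, real_inner_smul_left]
      nlinarith [hlt p hp]
    filter_upwards [tendsto_one_div_add_atTop_nhds_zero_nat.eventually_lt_const h2] with k hk h0
    have := integral_inner_neg hθ hcomp hv hv0 hz hmax (continuous_trunc hf (hpos k))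
      (monotone_trunc hm.monotoneOn (hpos k)) (by
        rw [h1, trunc_of_le hk.le, trunc, max_eq_right (hpos k).le]
        exact hm (hpos k) h2 hk)
    rw [← hHin k hv0, h0, inner_zero_right] at this
    exact lt_irrefl _ this
  set N : ℕ → V n := fun k => ‖H k‖⁻¹ • H k with hN
  have hNball : ∀ k, N k ∈ Metric.closedBall (0 : V n) 1 := fun k => by
    rw [mem_closedBall_zero_iff, hN, norm_smul, norm_inv, norm_norm]
    exact inv_mul_le_one
  obtain ⟨w, -, φ, hφ, hlim⟩ := (isCompact_closedBall (0 : V n) 1).tendsto_subseq hNball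
  have hφ' := hφ.tendsto_atTop
  have hw1 : ‖w‖ = 1 := by
    refine tendsto_nhds_unique hlim.norm (tendsto_const_nhds.congr' ?_)
    filter_upwards [hφ'.eventually hne] with k hk
    simp [hN, norm_smul, hk]
  have hw0 : w (Fin.last n) = 0 := by
    have h : Continuous fun z : V n => z (Fin.last n) := by fun_prop
    refine tendsto_nhds_unique ((h.tendsto w).comp hlim) ?_
    have : ∀ k, N k (Fin.last n) = 0 := fun k => by simp [hN, hH0]
    simp only [Function.comp_def, this]
    exact tendsto_const_nhds
  have hmax : ∀ x ∈ K, ⟪w, x⟫ ≤ ⟪w, z⟫ := by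
    refine hK.inner_le_of_relint hθ hw0 fun y hy => ?_
    rw [← sub_nonpos, ← inner_sub_right, real_inner_comm]
    refine le_of_tendsto (tendsto_const_nhds.inner hlim) ?_
    filter_upwards [hφ'.eventually (hvar y hy)] with k hk
    simp only [Function.comp_apply, hN, real_inner_smul_right]
    exact mul_nonpos_of_nonneg_of_nonpos (by positivity) hk
  have hle : ⟪w, w⟫ ≤ 0 := by
    refine le_of_tendsto (tendsto_const_nhds.inner hlim) (Filter.Eventually.of_forall fun k => ?_)
    simp only [Function.comp_apply, hN, real_inner_smul_right]
    refine mul_nonpos_of_nonneg_of_nonpos (by positivity) ?_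
    rw [hHin _ hw0]
    exact integral_inner_nonpos hθ hcomp hw1 hw0 hz hmax (continuous_trunc hf (hpos _))
      (monotone_trunc hm.monotoneOn (hpos _))
  rw [real_inner_self_eq_norm_sq, hw1] at hle
  norm_num at hle

lemma IsCapBody.exists_moment_eq_zero (hθ : θ ∈ Ioc 0 (π / 2)) (hK : IsCapBody n θ K) {f : ℝ → ℝ}
    (hf : ContinuousOn f (Ioi 0)) (hm : StrictMonoOn f (Ioi 0)) :
    ∃ z ∈ relintBase n K, ∀ i : Fin (n + 1), i ≠ Fin.last n →
      ∫ ζ, f (capSupp n θ K z ζ) * ζ i ∂capMeasure n θ = 0 := by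
  have hcomp := hK.1
  obtain ⟨p, hp⟩ := hK.2.2.2.2.2.2
  obtain ⟨z, hz, hz0, hvar⟩ := exists_variational_singular hθ hcomp hK.2.1
    ⟨p, relintBase_subset hp, hp.1⟩ hf hm.monotoneOn
  have hvar' : ∀ y ∈ relintBase n K, ∀ ε > 0, (∀ ζ ∈ capCap n θ, ε ≤ capSupp n θ K y ζ) →
      ⟪y - z, moment n θ K (trunc f ε) z⟫ ≤ 0 := by
    intro y hy ε hε h
    rw [inner_moment_of_horizontal hθ hcomp (continuous_trunc hf hε) z (by simp [hy.1, hz0])]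
    have := hvar y (relintBase_subset hy) hy.1 ε hε h
    simp only [capSupp_sub, mul_neg, integral_neg, real_inner_comm _ (y - z)] at this ⊢
    linarith
  have hzr : z ∈ relintBase n K := by
    refine hK.mem_relintBase_of_moment hθ hf hm hz hz0 fun y hy => ?_
    obtain ⟨ε, hε, h⟩ := hK.exists_le_capSupp hθ hy
    filter_upwards [tendsto_one_div_add_atTop_nhds_zero_nat.eventually_le_const hε] with k hk
    exact hvar' y hy _ (by positivity) fun ζ hζ => hk.trans (h ζ hζ)
  refine ⟨z, hzr, fun i hi => ?_⟩
  obtain ⟨ε₁, hε₁, h₁⟩ := hK.exists_le_capSupp hθ hzr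
  obtain ⟨-, r, hr, hball⟩ := id hzr
  have hle : ∀ w : V n, w (Fin.last n) = 0 →
      ∫ ζ, f (capSupp n θ K z ζ) * ⟪w, ζ⟫ ∂capMeasure n θ ≤ 0 := by
    intro w hw0
    obtain ⟨t, ht, htr⟩ : ∃ t > 0, t * ‖w‖ < r / 2 := by
      refine ⟨r / 2 / (‖w‖ + 1), by positivity, ?_⟩
      rw [div_mul_eq_mul_div, div_lt_iff₀ (by positivity)]
      nlinarith [norm_nonneg w]
    have hy : z + t • w ∈ relintBase n K := by
      refine ⟨by simp [hz0, hw0], r / 2, half_pos hr, fun y hy0 hy => hball y hy0 ?_⟩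
      have h1 := norm_sub_le_norm_sub_add_norm_sub y (z + t • w) z
      rw [add_sub_cancel_left, norm_smul, Real.norm_eq_abs, abs_of_pos ht] at h1
      linarith
    obtain ⟨ε₂, hε₂, h₂⟩ := hK.exists_le_capSupp hθ hy
    have hε : 0 < min ε₁ ε₂ := lt_min hε₁ hε₂
    have h := hvar' _ hy (min ε₁ ε₂) hε fun ζ hζ => (min_le_right _ _).trans (h₂ ζ hζ)
    rw [add_sub_cancel_left, real_inner_smul_left,
      inner_moment_of_horizontal hθ hcomp (continuous_trunc hf hε) z hw0,
      ← integral_trunc f fun ζ hζ => (min_le_left _ _).trans (h₁ ζ hζ)] at h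
    exact nonpos_of_mul_nonpos_right h ht
  have hi0 : (EuclideanSpace.single i (1 : ℝ)) (Fin.last n) = 0 := by simp [hi.symm]
  have h1 := hle (EuclideanSpace.single i 1) hi0
  have h2 := hle (-EuclideanSpace.single i 1) (by rw [PiLp.neg_apply, hi0, neg_zero])
  simp only [inner_neg_left, EuclideanSpace.inner_single_left, map_one, one_mul, mul_neg,
    integral_neg] at h1 h2
  linarith

lemma integral_inner_eq_zero (hθ : θ ∈ Ioc 0 (π / 2)) (hK : IsCompact K) {g : ℝ → ℝ}
    (hg : Continuous g) {z w : V n} (hw : w (Fin.last n) = 0)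
    (h : ∀ i : Fin (n + 1), i ≠ Fin.last n →
      ∫ ζ, g (capSupp n θ K z ζ) * ζ i ∂capMeasure n θ = 0) :
    ∫ ζ, g (capSupp n θ K z ζ) * ⟪w, ζ⟫ ∂capMeasure n θ = 0 := by
  have hc := continuous_capSupp_right (θ := θ) hK z
  have : ∀ ζ : V n, g (capSupp n θ K z ζ) * ⟪w, ζ⟫ =
      ∑ i, w i * (g (capSupp n θ K z ζ) * ζ i) := fun ζ => by
    rw [PiLp.inner_apply, Finset.mul_sum]
    refine Finset.sum_congr rfl fun i _ => ?_
    simp only [RCLike.inner_apply, conj_trivial]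
    ring
  simp only [this]
  rw [integral_finsetSum _ fun i _ => integrable_capMeasure hθ (by fun_prop)]
  refine Finset.sum_eq_zero fun i _ => ?_
  rw [integral_const_mul]
  rcases eq_or_ne i (Fin.last n) with rfl | hi
  · rw [hw, zero_mul]
  · rw [h i hi, mul_zero]

lemma IsCapBody.moment_eq_zero_unique (hθ : θ ∈ Ioc 0 (π / 2)) (hK : IsCapBody n θ K) {f : ℝ → ℝ}
    (hf : ContinuousOn f (Ioi 0)) (hm : StrictMonoOn f (Ioi 0)) {y z : V n}
    (hy : y ∈ relintBase n K) (hz : z ∈ relintBase n K)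
    (hy' : ∀ i : Fin (n + 1), i ≠ Fin.last n →
      ∫ ζ, f (capSupp n θ K y ζ) * ζ i ∂capMeasure n θ = 0)
    (hz' : ∀ i : Fin (n + 1), i ≠ Fin.last n →
      ∫ ζ, f (capSupp n θ K z ζ) * ζ i ∂capMeasure n θ = 0) : y = z := by
  by_contra hne
  have hcomp := hK.1
  have hsin : 0 < Real.sin θ := Real.sin_pos_of_pos_of_lt_pi hθ.1 (by linarith [hθ.2, pi_pos])
  obtain ⟨ε₁, hε₁, h₁⟩ := hK.exists_le_capSupp hθ hy
  obtain ⟨ε₂, hε₂, h₂⟩ := hK.exists_le_capSupp hθ hz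
  set ε := min ε₁ ε₂
  have hε : 0 < ε := lt_min hε₁ hε₂
  have h₁ : ∀ ζ ∈ capCap n θ, ε ≤ capSupp n θ K y ζ := fun ζ hζ =>
    (min_le_left _ _).trans (h₁ ζ hζ)
  have h₂ : ∀ ζ ∈ capCap n θ, ε ≤ capSupp n θ K z ζ := fun ζ hζ =>
    (min_le_right _ _).trans (h₂ ζ hζ)
  have hg := continuous_trunc hf hε
  have hgm := monotone_trunc hm.monotoneOn hε
  have cy := continuous_capSupp_right (θ := θ) hcomp y
  have cz := continuous_capSupp_right (θ := θ) hcomp z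
  set w := y - z with hw
  have hw0 : w (Fin.last n) = 0 := by simp [hw, hy.1, hz.1]
  have iy := integral_inner_eq_zero hθ hcomp hg (z := y) hw0 fun i hi => by
    rw [← integral_trunc f h₁, hy' i hi]
  have iz := integral_inner_eq_zero hθ hcomp hg (z := z) hw0 fun i hi => by
    rw [← integral_trunc f h₂, hz' i hi]
  have hsub : ∀ ζ, capSupp n θ K z ζ = capSupp n θ K y ζ + ⟪w, ζ⟫ := fun ζ => by
    have := capSupp_sub (θ := θ) (K := K) y z ζ
    rw [real_inner_comm ζ, hw]
    linarith
  have hwn : 0 < ‖w‖ := norm_pos_iff.2 (sub_ne_zero.2 hne)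
  have hmem : Real.sin θ • (‖w‖⁻¹ • w) ∈ capCap n θ :=
    sin_smul_mem_capCap (by simp [norm_smul, hwn.ne']) (by simp [hw0])
  have hpos := integral_capMeasure_pos hθ (h := fun ζ =>
    trunc f ε (capSupp n θ K z ζ) * ⟪w, ζ⟫ - trunc f ε (capSupp n θ K y ζ) * ⟪w, ζ⟫)
    (by fun_prop) (fun ζ _ => by
      rw [← sub_mul]
      rcases le_total 0 ⟪w, ζ⟫ with h | h
      · exact mul_nonneg (sub_nonneg.2 (hgm (by rw [hsub]; linarith))) h
      · exact mul_nonneg_of_nonpos_of_nonpos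
          (sub_nonpos.2 (hgm (by rw [hsub]; linarith))) h) hmem (by
      have hin : 0 < ⟪w, Real.sin θ • (‖w‖⁻¹ • w)⟫ := by
        rw [real_inner_smul_right, real_inner_smul_right, real_inner_self_eq_norm_sq]
        positivity
      rw [← sub_mul, trunc_of_le (h₁ _ hmem), trunc_of_le (h₂ _ hmem)]
      refine mul_pos (sub_pos.2 (hm (hε.trans_le (h₁ _ hmem)) (hε.trans_le (h₂ _ hmem)) ?_)) hin
      rw [hsub]
      linarith)
  rw [integral_sub (integrable_capMeasure hθ (h := fun ζ => trunc f ε (capSupp n θ K z ζ) * ⟪w, ζ⟫)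
    (by fun_prop)) (integrable_capMeasure hθ (h := fun ζ => trunc f ε (capSupp n θ K y ζ) * ⟪w, ζ⟫)
    (by fun_prop)), iy, iz] at hpos
  linarith

lemma PsiOK.deriv_props {ψ : ℝ → ℝ} (hψ : PsiOK ψ) :
    ContinuousOn (deriv ψ) (Ioi 0) ∧ StrictMonoOn (deriv ψ) (Ioi 0) := by
  rcases hψ with rfl | ⟨p, hp, rfl⟩ | rfl
  · have h : deriv (fun x : ℝ => x ^ 2) = fun x => 2 * x := by ext x; simp
    rw [h]
    exact ⟨by fun_prop, fun x _ y _ hxy => by dsimp only; linarith⟩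
  · have h : EqOn (fun x : ℝ => p * x ^ (p - 1)) (deriv fun x : ℝ => x ^ p) (Ioi 0) := fun x hx =>
      (Real.hasDerivAt_rpow_const (Or.inl (ne_of_gt hx))).deriv.symm
    refine ⟨ContinuousOn.congr ?_ h.symm, StrictMonoOn.congr (fun x hx y hy hxy => ?_) h⟩
    · exact continuousOn_const.mul
        (continuousOn_id.rpow_const fun x hx => Or.inl (ne_of_gt hx))
    · exact mul_lt_mul_of_neg_left
        (Real.strictAntiOn_rpow_Ioi_of_exponent_neg (by linarith) hx hy hxy) hp
  · have h : deriv (fun x : ℝ => -Real.log x) = fun x => -x⁻¹ := by ext x; simp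
    rw [h]
    exact ⟨(continuousOn_inv₀.mono fun x hx => ne_of_gt hx).neg,
      fun x hx y _ hxy => neg_lt_neg (inv_strictAnti₀ hx hxy)⟩

end

/-- existence and uniqueness of the entropy point of a capillary
convex body. -/
theorem capillary_entropy_point (ψ : ℝ → ℝ) (hψ : PsiOK ψ) (n : ℕ) (hn : 1 ≤ n)
    (θ : ℝ) (hθ : θ ∈ Ioc 0 (π / 2)) (K : Set (V n)) (hK : IsCapBody n θ K) :
    (∀ ζ ∈ capCap n θ, ∀ z ∈ relintBase n K,
      0 < suppFn n K (ζ + Real.cos θ • Etop n) - ⟪ζ, z⟫) ∧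
    (∃! z : V n, z ∈ relintBase n K ∧
      ∀ i : Fin (n + 1), i ≠ Fin.last n →
        ∫ ζ in capCap n θ,
          deriv ψ (suppFn n K (ζ + Real.cos θ • Etop n) - ⟪ζ, z⟫) * ζ i ∂μH[(n : ℝ)] = 0) := by
  obtain ⟨hf, hm⟩ := hψ.deriv_props
  refine ⟨fun ζ hζ z hz => hK.capSupp_pos hθ hζ hz, ?_⟩
  obtain ⟨z, hz, hz'⟩ := hK.exists_moment_eq_zero hθ hf hm
  exact ⟨z, ⟨hz, hz'⟩, fun y hy => hK.moment_eq_zero_unique hθ hf hm hy.1 hz hy.2 hz'⟩
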